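/- Let N ∈ ℕ and let q, a, t ∈ ℂ satisfy (q;q)_N ≠ 0 and (t;q)_{N+1} ≠ 0. Then F_N(a,0;t) = (1−tq^N)/(1−t) · Σ_{n=0}^{N} (−1)^n [N,n]_q (q;q)_n (at)^n q^{n(n+1)/2} / (tq;q)_n. -/

import Mathlib

/-!
After multiplication by `(t;q)_N`, both sides become the same polynomial `R_N(a,t)`
(`fineR` below). Splitting off the term `n = 0` and shifting the summation index gives

* for the right-hand side, `R_{N+1}(a,t) = (tq;q)_{N+1} - (1 - q^{N+1}) a t q R_N(a,tq)`;
* for the left-hand side,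
  `L_{N+1}(a,t) = (t;q)_{N+1} + (1 - q^{N+1}) (1 - aq) t L_N(aq,t)`.

The first recursion, which moves `t`, is taken as the definition of `R`. The key point
(`fineR_succ'`) is that `R` also satisfies the second one, which moves `a`: applying each
recursion once after the other leads to the same multiple of `R_{N-1}(aq,tq)`, and the
remaining terms agree by inspection.
-/

open Finset

/-- The q-Pochhammer symbol (z; q)_n = prod_{j=0}^{n-1} (1 - z q^j). -/
noncomputable def qPoch (q z : ℂ) (n : ℕ) : ℂ :=
  ∏ j ∈ Finset.range n, (1 - z * q ^ j)

/-- The Gaussian binomial coefficient [N, n]_q = (q;q)_N / ((q;q)_n (q;q)_{N-n}). -/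
noncomputable def qBinom (q : ℂ) (N n : ℕ) : ℂ :=
  qPoch q q N / (qPoch q q n * qPoch q q (N - n))

/-- The finite analogue of Fine's function,
F_N(a, b; t) = sum_{n=0}^{N} [N,n]_q (aq;q)_n (t;q)_{N-n} (q;q)_n t^n / ((bq;q)_n (t;q)_N). -/
noncomputable def fineF (q a b t : ℂ) (N : ℕ) : ℂ :=
  ∑ n ∈ Finset.range (N + 1),
    qBinom q N n * (qPoch q (a * q) n * qPoch q t (N - n) * qPoch q q n * t ^ n) /
      (qPoch q (b * q) n * qPoch q t N)

theorem qPoch_succ (q z : ℂ) (n : ℕ) : qPoch q z (n + 1) = qPoch q z n * (1 - z * q ^ n) := by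
  simp [qPoch, Finset.prod_range_succ]

theorem qPoch_succ' (q z : ℂ) (n : ℕ) : qPoch q z (n + 1) = (1 - z) * qPoch q (z * q) n := by
  simp only [qPoch, Finset.prod_range_succ', pow_zero, mul_one]
  rw [mul_comm]
  congr 1
  refine Finset.prod_congr rfl fun j _ => ?_
  ring

theorem qPoch_ne_zero_of_le {q z : ℂ} {m n : ℕ} (hmn : m ≤ n) (h : qPoch q z n ≠ 0) :
    qPoch q z m ≠ 0 := by
  unfold qPoch at *
  rw [Finset.prod_ne_zero_iff] at *
  intro j hj
  exact h j (Finset.mem_range.2 ((Finset.mem_range.1 hj).trans_le hmn))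

/-- The product `[N,n]_q (q;q)_n = (q;q)_N / (q;q)_{N-n}` under a simultaneous shift. -/
theorem qBinom_mul_succ {q : ℂ} {N n : ℕ} (hn : n ≤ N) (hq : qPoch q q (N + 1) ≠ 0) :
    qBinom q (N + 1) (n + 1) * qPoch q q (n + 1) =
      (1 - q ^ (N + 1)) * (qBinom q N n * qPoch q q n) := by
  have h1 : qPoch q q (n + 1) ≠ 0 := qPoch_ne_zero_of_le (by omega) hq
  have h2 : qPoch q q n ≠ 0 := qPoch_ne_zero_of_le (by omega) hq
  have h3 : qPoch q q (N - n) ≠ 0 := qPoch_ne_zero_of_le (by omega) hq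
  unfold qBinom
  rw [Nat.add_sub_add_right, qPoch_succ q q N]
  field_simp
  ring

theorem qBinom_zero_right {q : ℂ} {N : ℕ} (hq : qPoch q q N ≠ 0) : qBinom q N 0 = 1 := by
  have h0 : qPoch q q 0 = 1 := by simp [qPoch]
  rw [qBinom, h0, Nat.sub_zero, one_mul, div_self hq]

/-- The common value of both sides of the identity multiplied by `(t;q)_N`, defined by the
recursion that replaces `t` by `tq`. -/
noncomputable def fineR (q : ℂ) : ℕ → ℂ → ℂ → ℂ
  | 0, _, _ => 1
  | N + 1, a, t =>
    qPoch q (t * q) (N + 1) - (1 - q ^ (N + 1)) * (a * t * q) * fineR q N a (t * q)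

/-- `fineR` satisfies the recursion of the finite Fine function, which replaces `a` by `aq`. -/
theorem fineR_succ' (q : ℂ) (N : ℕ) (a t : ℂ) :
    fineR q (N + 1) a t =
      qPoch q t (N + 1) + (1 - q ^ (N + 1)) * (1 - a * q) * t * fineR q N (a * q) t := by
  induction N generalizing a t with
  | zero =>
    simp only [fineR, qPoch, Finset.prod_range_one, zero_add, pow_zero, pow_one]
    ring
  | succ N ih =>
    rw [fineR, ih a (t * q), fineR, qPoch_succ' q t, qPoch_succ q (t * q) (N + 1)]
    ring

theorem qPoch_mul_fineF (q : ℂ) (N : ℕ) (a t : ℂ)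
    (hq : qPoch q q N ≠ 0) (ht : qPoch q t N ≠ 0) :
    qPoch q t N * fineF q a 0 t N = fineR q N a t := by
  have hb : ∀ n, qPoch q (0 * q) n = 1 := fun n => by simp [qPoch]
  induction N generalizing a with
  | zero => simp [fineF, fineR, qBinom, qPoch]
  | succ N ih =>
    have hq' : qPoch q q N ≠ 0 := qPoch_ne_zero_of_le N.le_succ hq
    have ht' : qPoch q t N ≠ 0 := qPoch_ne_zero_of_le N.le_succ ht
    rw [fineR_succ', ← ih (a * q) hq' ht', fineF, Finset.sum_range_succ', mul_add, add_comm]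
    congr 1
    · have h0 : ∀ z, qPoch q z 0 = 1 := fun z => by simp [qPoch]
      rw [qBinom_zero_right hq, hb, h0, h0, Nat.sub_zero]
      field_simp
    · rw [fineF, Finset.mul_sum, Finset.mul_sum, Finset.mul_sum]
      refine Finset.sum_congr rfl fun n hn => ?_
      have hB := qBinom_mul_succ (Nat.lt_succ_iff.1 (Finset.mem_range.1 hn)) hq
      rw [hb, hb, Nat.add_sub_add_right, qPoch_succ' q (a * q)]
      generalize qPoch q (a * q * q) n = A
      field_simp
      linear_combination
        ((1 - a * q) * A * qPoch q t (N - n) * t ^ (n + 1)) * hB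

theorem qPoch_mul_sum (q : ℂ) (N : ℕ) (a t : ℂ)
    (hq : qPoch q q N ≠ 0) (ht : qPoch q (t * q) N ≠ 0) :
    qPoch q (t * q) N * ∑ n ∈ Finset.range (N + 1),
      (-1) ^ n * qBinom q N n * (qPoch q q n * (a * t) ^ n * q ^ (n * (n + 1) / 2)) /
        qPoch q (t * q) n = fineR q N a t := by
  induction N generalizing t with
  | zero => simp [fineR, qBinom, qPoch]
  | succ N ih =>
    have hq' : qPoch q q N ≠ 0 := qPoch_ne_zero_of_le N.le_succ hq
    have ht1 := ht
    rw [qPoch_succ'] at ht1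
    have h1 := left_ne_zero_of_mul ht1
    have ht' := right_ne_zero_of_mul ht1
    rw [fineR, ← ih (t * q) hq' ht', Finset.sum_range_succ', mul_add, add_comm, sub_eq_add_neg]
    congr 1
    · have h0 : ∀ z, qPoch q z 0 = 1 := fun z => by simp [qPoch]
      rw [qBinom_zero_right hq, h0, h0]
      simp
    · rw [Finset.mul_sum, Finset.mul_sum, Finset.mul_sum, ← Finset.sum_neg_distrib]
      refine Finset.sum_congr rfl fun n hn => ?_
      have hnN := Nat.lt_succ_iff.1 (Finset.mem_range.1 hn)
      have hB := qBinom_mul_succ hnN hq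
      have hn' : qPoch q (t * q * q) n ≠ 0 := qPoch_ne_zero_of_le hnN ht'
      have hexp : (n + 1) * (n + 1 + 1) / 2 = n * (n + 1) / 2 + (n + 1) := by
        rw [show (n + 1) * (n + 1 + 1) = n * (n + 1) + (n + 1) * 2 by ring,
          Nat.add_mul_div_right _ _ two_pos]
      rw [hexp, qPoch_succ' q (t * q) N, qPoch_succ' q (t * q) n, pow_add q]
      -- naming the exponent keeps the truncated division away from `ring`
      generalize n * (n + 1) / 2 = e
      rw [mul_div_assoc', mul_div_assoc', mul_div_assoc', ← neg_div,
        div_eq_div_iff (mul_ne_zero h1 hn') hn']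
      linear_combination
        ((1 - t * q) * qPoch q (t * q * q) N * qPoch q (t * q * q) n * (-1) ^ (n + 1) *
          (a * t) ^ (n + 1) * q ^ e * q ^ (n + 1)) * hB

theorem fineF_a_zero_t (N : ℕ) (q a t : ℂ)
    (hq : qPoch q q N ≠ 0) (ht : qPoch q t (N + 1) ≠ 0) :
    fineF q a 0 t N =
      (1 - t * q ^ N) / (1 - t) *
        ∑ n ∈ Finset.range (N + 1),
          (-1) ^ n * qBinom q N n * (qPoch q q n * (a * t) ^ n * q ^ (n * (n + 1) / 2)) /
            qPoch q (t * q) n := by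
  have htN : qPoch q t N ≠ 0 := qPoch_ne_zero_of_le N.le_succ ht
  have ht1 := ht
  rw [qPoch_succ'] at ht1
  have h1 := left_ne_zero_of_mul ht1
  have hL := qPoch_mul_fineF q N a t hq htN
  have hR := qPoch_mul_sum q N a t hq (right_ne_zero_of_mul ht1)
  -- the two normalising factors are related by `(t;q)_N (1 - t q^N) = (1 - t) (tq;q)_N`
  have hP := (qPoch_succ q t N).symm.trans (qPoch_succ' q t N)
  apply mul_left_cancel₀ htN
  rw [hL, ← hR, ← mul_assoc, ← mul_div_assoc, hP, mul_div_cancel_left₀ _ h1]
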